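/- For every nonnegative integer n, the gauge Hamiltonian \bar H_1 = −4 T_1 − 2(2b+1) J^- + 4ω J^0 + Nω(4a+2b+1), where T_1 = Σ_{i=1}^N z_i ∂_i² + 2a Σ_{i=1}^N (z_i − z_{i+1})^{-1}(z_i ∂_i − z_{i+1} ∂_{i+1}) − a Σ_{i=1}^N (z_i + z_{i+1})(z_i − z_{i+1})^{-2}(1 − K_{i,i+1}), J^- = Σ_i ∂_i and J^0 = Σ_i z_i ∂_i, leaves invariant the space \bar𝓗_1^n spanned by all elements of the form f(σ_1,σ_2) Λ|s⟩ and g(σ_1) Λ(z_1|s⟩), where |s⟩ ranges over Σ, f is a polynomial in σ_1 and σ_2 of degree at most 1 in σ_2 with total z-degree at most n, and g is a polynomial in σ_1 of degree at most n−1. (K_{i,i+1} exchanges the variables z_i and z_{i+1}, acting trivially on the spin component; the assertion includes the claim that \bar H_1 applied to such an element, computed in the field of rational functions, is again a Σ-valued polynomial in \bar𝓗_1^n.) -/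

import Mathlib

noncomputable section

open MvPolynomial

/-- Polynomials in `N` variables over `ℂ`. -/
abbrev MvP (N : ℕ) : Type := MvPolynomial (Fin N) ℂ

/-- The spin space `Σ`: complex functions on `Fin N → Fin d`. -/
abbrev SpinV (N d : ℕ) : Type := (Fin N → Fin d) → ℂ

/-- `Σ`-valued polynomials. -/
abbrev SpinPoly (N d : ℕ) : Type := (Fin N → Fin d) → MvP N

/-- The canonical embedding of polynomials into the field of rational functions. -/
noncomputable def phi (N : ℕ) : MvP N →+* FractionRing (MvP N) :=
  algebraMap (MvP N) (FractionRing (MvP N))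

/-- The power sum `σ_k = ∑ i, z_i ^ k`. -/
def sig (N k : ℕ) : MvP N := ∑ i : Fin N, X i ^ k

/-- The action of a permutation `π ∈ S_N` on the spin space, permuting the `N` spin slots. -/
def spinPerm {N d : ℕ} (π : Equiv.Perm (Fin N)) (v : SpinV N d) : SpinV N d :=
  fun c => v (c ∘ π)

/-- The spin vector `|s_i⟩ = (1/N!) ∑_{π ∈ S_N, π(1) = i} π |s⟩`. -/
noncomputable def sComp {N d : ℕ} [NeZero N] (s : SpinV N d) (i : Fin N) : SpinV N d :=
  (N.factorial : ℂ)⁻¹ •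
    ∑ π ∈ Finset.univ.filter (fun π : Equiv.Perm (Fin N) => π 0 = i), spinPerm π s

/-- The symmetrization `Λ|s⟩ = ∑ i, |s_i⟩`. -/
noncomputable def Lam {N d : ℕ} [NeZero N] (s : SpinV N d) : SpinV N d :=
  ∑ i : Fin N, sComp s i

/-- The operator
`T_1 = ∑ i z_i ∂_i² + 2a ∑ i (z_i - z_{i+1})⁻¹ (z_i ∂_i - z_{i+1} ∂_{i+1})
  - a ∑ i (z_i + z_{i+1}) (z_i - z_{i+1})⁻² (1 - K_{i,i+1})`
(indices cyclic, `K_{i,i+1}` exchanging the variables `z_i` and `z_{i+1}`),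
computed in the field of rational functions. -/
noncomputable def T1op (N : ℕ) [NeZero N] (a : ℝ) (f : MvP N) : FractionRing (MvP N) :=
  (∑ i : Fin N, phi N (X i * pderiv i (pderiv i f)))
  + phi N (C ((2 * a : ℝ) : ℂ)) *
      ∑ i : Fin N, (phi N (X i - X (i + 1)))⁻¹ *
        phi N (X i * pderiv i f - X (i + 1) * pderiv (i + 1) f)
  - phi N (C ((a : ℝ) : ℂ)) *
      ∑ i : Fin N, phi N (X i + X (i + 1)) * ((phi N (X i - X (i + 1)))⁻¹) ^ 2 *
        phi N (f - rename (Equiv.swap i (i + 1)) f)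

/-- The gauge Hamiltonian `H̄_1 = -4 T_1 - 2(2b+1) J⁻ + 4ω J⁰ + Nω(4a+2b+1)`, acting
componentwise on `Σ`-valued polynomials and computed in the field of rational functions. -/
noncomputable def Hbar1op (N : ℕ) [NeZero N] (a b ω : ℝ) (f : MvP N) :
    FractionRing (MvP N) :=
  -(phi N (C ((4 : ℝ) : ℂ)) * T1op N a f)
  - phi N (C ((2 * (2 * b + 1) : ℝ) : ℂ)) * ∑ i : Fin N, phi N (pderiv i f)
  + phi N (C ((4 * ω : ℝ) : ℂ)) * ∑ i : Fin N, phi N (X i * pderiv i f)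
  + phi N (C ((N * ω * (4 * a + 2 * b + 1) : ℝ) : ℂ)) * phi N f

/-- Generators of type `f(σ_1, σ_2) Λ|s⟩`, where `f` has degree at most `1` in `σ_2`
and total `z`-degree at most `n`. -/
def H1genF (N d n : ℕ) [NeZero N] : Set (SpinPoly N d) :=
  {Φ | ∃ (s : SpinV N d) (F : MvPolynomial (Fin 2) ℂ),
    F.degreeOf 1 ≤ 1 ∧
    (aeval ![sig N 1, sig N 2] F : MvP N).totalDegree ≤ n ∧
    Φ = fun c => C (Lam s c) * aeval ![sig N 1, sig N 2] F}

/-- Generators of type `g(σ_1) Λ(z_1 |s⟩)`, where `g` has degree at most `n - 1`. -/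
def H1genG (N d n : ℕ) [NeZero N] : Set (SpinPoly N d) :=
  {Φ | ∃ (s : SpinV N d) (G : Polynomial ℂ),
    (Polynomial.aeval (sig N 1) G : MvP N).totalDegree + 1 ≤ n ∧
    Φ = fun c => ∑ i : Fin N, C (sComp s i c) * (X i * Polynomial.aeval (sig N 1) G)}

/-- The space `H̄𝓗_1^n`. -/
noncomputable def H1space (N d n : ℕ) [NeZero N] : Submodule ℂ (SpinPoly N d) :=
  Submodule.span ℂ (H1genF N d n ∪ H1genG N d n)

theorem mulX_pderiv_mem {N n : ℕ} (i j : Fin N) {f : MvP N} (hf : f.totalDegree ≤ n) :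
    (X i * pderiv j f : MvP N).totalDegree ≤ n := by
  classical
  rw [← mem_restrictTotalDegree]
  rw [f.as_sum, map_sum, Finset.mul_sum]
  refine Submodule.sum_mem _ fun s hs => ?_
  rw [mem_restrictTotalDegree, pderiv_monomial]
  have h1 : s.sum (fun _ e => e) ≤ n := (le_totalDegree hs).trans hf
  by_cases h0 : s j = 0
  · simp [h0]
  · refine (totalDegree_mul _ _).trans ?_
    have h2 := totalDegree_monomial_le (s - Finsupp.single j 1) (coeff s f * (s j : ℂ))
    rw [totalDegree_X]
    have h3 : s = (s - Finsupp.single j 1) + Finsupp.single j 1 := by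
      ext k
      by_cases hk : k = j
      · subst hk; simp; omega
      · simp [Finsupp.single_apply, Ne.symm hk]
    have h4 : s.sum (fun _ e => e) = (s - Finsupp.single j 1).sum (fun _ e => e) + 1 := by
      conv_lhs => rw [h3]
      rw [Finsupp.sum_add_index' (by simp) (by simp)]
      simp
    have h5 : (s - Finsupp.single j 1).sum (fun _ => id) =
        (s - Finsupp.single j 1).sum (fun _ e => e) := rfl
    rw [h5] at h2
    omega

theorem deg_of_mul {N n : ℕ} {p q : MvP N} (hp : p ≠ 0) (h : (p * q).totalDegree ≤ n) :
    q.totalDegree ≤ n := by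
  by_cases hq : q = 0
  · simp [hq]
  · rw [totalDegree_mul_of_isDomain hp hq] at h; omega

theorem pderiv_mem {N n : ℕ} (j : Fin N) {f : MvP N} (hf : f.totalDegree ≤ n) :
    (pderiv j f : MvP N).totalDegree ≤ n :=
  deg_of_mul (X_ne_zero j) (mulX_pderiv_mem j j hf)

theorem pderiv_sig1 {N : ℕ} (i : Fin N) : pderiv i (sig N 1) = 1 := by
  classical
  simp [sig, pderiv_X, Pi.single_apply]

theorem pderiv_sig2 {N : ℕ} (i : Fin N) : pderiv i (sig N 2) = 2 * X i := by
  classical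
  simp [sig, pderiv_X, Pi.single_apply, Derivation.leibniz_pow]

theorem pderiv_S1 {N : ℕ} (i : Fin N) (P : Polynomial ℂ) :
    pderiv i (Polynomial.aeval (sig N 1) P) =
      Polynomial.aeval (sig N 1) (Polynomial.derivative P) := by
  rw [Derivation.map_aeval, pderiv_sig1]; simp

theorem rename_sig {N k : ℕ} (e : Equiv.Perm (Fin N)) : rename e (sig N k) = sig N k := by
  simp only [sig, map_sum, map_pow, rename_X]
  exact Equiv.sum_comp e (fun i => (X i : MvP N) ^ k)

theorem rename_S1 {N : ℕ} (e : Equiv.Perm (Fin N)) (P : Polynomial ℂ) :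
    rename e (Polynomial.aeval (sig N 1) P) = Polynomial.aeval (sig N 1) P := by
  rw [← Polynomial.aeval_algHom_apply, rename_sig]

/-- Shape of the functions `p(σ₁) + q(σ₁) σ₂`. -/
def Shape (N : ℕ) (f : MvP N) : Prop :=
  ∃ p q : Polynomial ℂ, f = Polynomial.aeval (sig N 1) p + Polynomial.aeval (sig N 1) q * sig N 2

theorem Shape.add {N : ℕ} {f g : MvP N} (hf : Shape N f) (hg : Shape N g) : Shape N (f + g) := by
  obtain ⟨p, q, rfl⟩ := hf
  obtain ⟨p', q', rfl⟩ := hg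
  exact ⟨p + p', q + q', by simp only [map_add]; ring⟩

theorem shape_of {N : ℕ} (F : MvPolynomial (Fin 2) ℂ) (hF : F.degreeOf 1 ≤ 1) :
    Shape N (aeval ![sig N 1, sig N 2] F) := by
  classical
  rw [degreeOf_le_iff] at hF
  rw [F.as_sum, map_sum]
  refine Finset.sum_induction _ (Shape N) (fun _ _ h h' => h.add h') ⟨0, 0, by simp⟩ ?_
  intro m hm
  have h := hF m hm
  rw [aeval_monomial, Finsupp.prod_fintype _ _ (by simp)]
  simp only [Fin.prod_univ_two, Matrix.cons_val_zero, Matrix.cons_val_one]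
  interval_cases h1 : m 1
  · exact ⟨Polynomial.monomial (m 0) (coeff m F), 0, by simp [Polynomial.aeval_monomial]⟩
  · exact ⟨0, Polynomial.monomial (m 0) (coeff m F), by
      simp [Polynomial.aeval_monomial, mul_assoc]⟩

theorem mem_F {N d n : ℕ} [NeZero N] (s : SpinV N d) {f : MvP N} (hf : Shape N f)
    (hn : f.totalDegree ≤ n) : (fun c => C (Lam s c) * f : SpinPoly N d) ∈ H1space N d n := by
  obtain ⟨p, q, rfl⟩ := hf
  refine Submodule.subset_span (Or.inl ⟨s, Polynomial.aeval (X 0) p + Polynomial.aeval (X 0) q * X 1,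
    ?_, ?_⟩)
  · have key : ∀ r : Polynomial ℂ,
        (Polynomial.aeval (X 0 : MvPolynomial (Fin 2) ℂ) r).degreeOf 1 = 0 := by
      intro r
      induction r using Polynomial.induction_on' with
      | add r r' h h' =>
        rw [map_add]
        have := degreeOf_add_le 1 (Polynomial.aeval (X 0 : MvPolynomial (Fin 2) ℂ) r)
          (Polynomial.aeval (X 0 : MvPolynomial (Fin 2) ℂ) r')
        omega
      | monomial k c =>
        rw [Polynomial.aeval_monomial]
        have := degreeOf_mul_le 1 (algebraMap ℂ (MvPolynomial (Fin 2) ℂ) c) (X 0 ^ k)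
        rw [degreeOf_X_pow_of_ne k (by decide), MvPolynomial.algebraMap_eq, degreeOf_C] at this
        rw [MvPolynomial.algebraMap_eq]
        omega
    have h1 := degreeOf_add_le 1 (Polynomial.aeval (X 0 : MvPolynomial (Fin 2) ℂ) p)
          (Polynomial.aeval (X 0 : MvPolynomial (Fin 2) ℂ) q * X 1)
    have h2 := degreeOf_mul_le 1 (Polynomial.aeval (X 0 : MvPolynomial (Fin 2) ℂ) q) (X 1)
    rw [degreeOf_X_self] at h2
    have := key p
    have := key q
    omega
  · have e : aeval ![sig N 1, sig N 2]
        (Polynomial.aeval (X 0 : MvPolynomial (Fin 2) ℂ) p + Polynomial.aeval (X 0) q * X 1) =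
        Polynomial.aeval (sig N 1) p + Polynomial.aeval (sig N 1) q * sig N 2 := by
      rw [map_add, map_mul, ← Polynomial.aeval_algHom_apply, ← Polynomial.aeval_algHom_apply]
      simp
    rw [e]
    exact ⟨hn, rfl⟩

theorem mem_G {N d n : ℕ} [NeZero N] (s : SpinV N d) (G : Polynomial ℂ)
    (hn : (Polynomial.aeval (sig N 1) G : MvP N).totalDegree + 1 ≤ n) :
    (fun c => ∑ i : Fin N, C (sComp s i c) * (X i * Polynomial.aeval (sig N 1) G) : SpinPoly N d)
      ∈ H1space N d n :=
  Submodule.subset_span (Or.inr ⟨s, G, hn, rfl⟩)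

theorem T1op_add {N : ℕ} [NeZero N] (a : ℝ) (f g : MvP N) :
    T1op N a (f + g) = T1op N a f + T1op N a g := by
  unfold T1op
  have e1 : ∀ i : Fin N, phi N (X i * pderiv i (pderiv i (f + g))) =
      phi N (X i * pderiv i (pderiv i f)) + phi N (X i * pderiv i (pderiv i g)) := by
    intro i; simp only [map_add, mul_add]
  have e2 : ∀ i : Fin N, (phi N (X i - X (i + 1)))⁻¹ *
        phi N (X i * pderiv i (f + g) - X (i + 1) * pderiv (i + 1) (f + g)) =
      (phi N (X i - X (i + 1)))⁻¹ *
        phi N (X i * pderiv i f - X (i + 1) * pderiv (i + 1) f) +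
      (phi N (X i - X (i + 1)))⁻¹ *
        phi N (X i * pderiv i g - X (i + 1) * pderiv (i + 1) g) := by
    intro i; rw [← mul_add, ← map_add, map_add, map_add]; congr 2; ring
  have e3 : ∀ i : Fin N, phi N (X i + X (i + 1)) * ((phi N (X i - X (i + 1)))⁻¹) ^ 2 *
        phi N (f + g - rename (Equiv.swap i (i + 1)) (f + g)) =
      phi N (X i + X (i + 1)) * ((phi N (X i - X (i + 1)))⁻¹) ^ 2 *
        phi N (f - rename (Equiv.swap i (i + 1)) f) +
      phi N (X i + X (i + 1)) * ((phi N (X i - X (i + 1)))⁻¹) ^ 2 *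
        phi N (g - rename (Equiv.swap i (i + 1)) g) := by
    intro i; rw [← mul_add, ← map_add, map_add (rename _)]; congr 2; ring
  simp only [e1, e2, e3, Finset.sum_add_distrib]
  ring

theorem T1op_C_mul {N : ℕ} [NeZero N] (a : ℝ) (c : ℂ) (f : MvP N) :
    T1op N a (C c * f) = phi N (C c) * T1op N a f := by
  unfold T1op
  have e1 : ∀ i : Fin N, phi N (X i * pderiv i (pderiv i (C c * f))) =
      phi N (C c) * phi N (X i * pderiv i (pderiv i f)) := by
    intro i; rw [← map_mul, pderiv_C_mul, pderiv_C_mul]; congr 1; ring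
  have e2 : ∀ i : Fin N, (phi N (X i - X (i + 1)))⁻¹ *
        phi N (X i * pderiv i (C c * f) - X (i + 1) * pderiv (i + 1) (C c * f)) =
      phi N (C c) * ((phi N (X i - X (i + 1)))⁻¹ *
        phi N (X i * pderiv i f - X (i + 1) * pderiv (i + 1) f)) := by
    intro i
    rw [mul_left_comm, ← map_mul, pderiv_C_mul, pderiv_C_mul]; congr 2; ring
  have e3 : ∀ i : Fin N, phi N (X i + X (i + 1)) * ((phi N (X i - X (i + 1)))⁻¹) ^ 2 *
        phi N (C c * f - rename (Equiv.swap i (i + 1)) (C c * f)) =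
      phi N (C c) * (phi N (X i + X (i + 1)) * ((phi N (X i - X (i + 1)))⁻¹) ^ 2 *
        phi N (f - rename (Equiv.swap i (i + 1)) f)) := by
    intro i
    rw [mul_left_comm, ← map_mul, map_mul, rename_C]; congr 2; ring
  simp only [e1, e2, e3, ← Finset.mul_sum]
  ring

theorem H_add {N : ℕ} [NeZero N] (a b ω : ℝ) (f g : MvP N) :
    Hbar1op N a b ω (f + g) = Hbar1op N a b ω f + Hbar1op N a b ω g := by
  unfold Hbar1op
  simp only [T1op_add, map_add, mul_add, Finset.sum_add_distrib]
  ring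

theorem H_C_mul {N : ℕ} [NeZero N] (a b ω : ℝ) (c : ℂ) (f : MvP N) :
    Hbar1op N a b ω (C c * f) = phi N (C c) * Hbar1op N a b ω f := by
  unfold Hbar1op
  simp only [T1op_C_mul, pderiv_C_mul, mul_left_comm _ (C c)]
  simp only [map_mul, ← Finset.mul_sum]
  ring

theorem H_sum {N : ℕ} [NeZero N] (a b ω : ℝ) {ι : Type} (t : Finset ι) (f : ι → MvP N) :
    Hbar1op N a b ω (∑ i ∈ t, f i) = ∑ i ∈ t, Hbar1op N a b ω (f i) := by
  have h := map_sum (AddMonoidHom.mk' (Hbar1op N a b ω) (H_add a b ω)) f t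
  exact h

theorem succ_ne {N : ℕ} [NeZero N] (hN : 3 ≤ N) (i : Fin N) : i ≠ i + 1 := by
  obtain ⟨M, rfl⟩ : ∃ M, N = M + 2 := ⟨N - 2, by omega⟩
  intro h
  have : (1 : Fin (M + 2)) = 0 := by simpa using h
  simp at this

theorem X_sub_ne {N : ℕ} {i j : Fin N} (h : i ≠ j) : (X i - X j : MvP N) ≠ 0 := by
  rw [sub_ne_zero]
  exact fun e => h (X_injective e)

theorem phi_ne {N : ℕ} {p : MvP N} (h : p ≠ 0) : phi N p ≠ 0 := by
  unfold phi
  exact (map_ne_zero_iff _ (IsFractionRing.injective (MvP N) (FractionRing (MvP N)))).2 h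

theorem phi_inv_mul {N : ℕ} {p q r : MvP N} (h : p ≠ 0) (e : r = p * q) :
    (phi N p)⁻¹ * phi N r = phi N q := by
  rw [e, map_mul, inv_mul_cancel_left₀ (phi_ne h)]

/-- The polynomial `p'(σ₁) + q'(σ₁) σ₂`. -/
def fA (N : ℕ) (p q : Polynomial ℂ) : MvP N :=
  Polynomial.aeval (sig N 1) (Polynomial.derivative p) +
    Polynomial.aeval (sig N 1) (Polynomial.derivative q) * sig N 2

theorem pderiv_shape {N : ℕ} (i : Fin N) (p q : Polynomial ℂ) :
    pderiv i (Polynomial.aeval (sig N 1) p + Polynomial.aeval (sig N 1) q * sig N 2) =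
      fA N p q + 2 * X i * Polynomial.aeval (sig N 1) q := by
  rw [map_add, pderiv_mul, pderiv_S1, pderiv_S1, pderiv_sig2, fA]
  ring

theorem F_case {N : ℕ} [NeZero N] (hN : 3 ≤ N) (a b ω : ℝ) (n : ℕ) {f : MvP N}
    (hf : Shape N f) (hn : f.totalDegree ≤ n) :
    ∃ f', Shape N f' ∧ f'.totalDegree ≤ n ∧ phi N f' = Hbar1op N a b ω f := by
  obtain ⟨p, q, rfl⟩ := hf
  set f := Polynomial.aeval (sig N 1) p + Polynomial.aeval (sig N 1) q * sig N 2 with hfdef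
  set B : MvP N := Polynomial.aeval (sig N 1) q with hB
  have hd : ∀ i, pderiv i f = fA N p q + 2 * X i * B := fun i => pderiv_shape i p q
  have hQ : ∀ i : Fin N, X i * pderiv i f - X (i + 1) * pderiv (i + 1) f =
      (X i - X (i + 1)) * (fA N p q + 2 * (X i + X (i + 1)) * B) := by
    intro i; rw [hd, hd]; ring
  have hsym : ∀ i : Fin N, f - rename (Equiv.swap i (i + 1)) f = 0 := by
    intro i
    rw [hfdef, hB, map_add, map_mul, rename_S1, rename_S1, rename_sig, sub_self]
  refine ⟨-(C ((4 : ℝ) : ℂ) * ((∑ i : Fin N, X i * pderiv i (pderiv i f)) +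
      C ((2 * a : ℝ) : ℂ) * ∑ i : Fin N, (fA N p q + 2 * (X i + X (i + 1)) * B)))
      - C ((2 * (2 * b + 1) : ℝ) : ℂ) * ∑ i : Fin N, pderiv i f
      + C ((4 * ω : ℝ) : ℂ) * ∑ i : Fin N, X i * pderiv i f
      + C ((N * ω * (4 * a + 2 * b + 1) : ℝ) : ℂ) * f, ?_, ?_, ?_⟩
  · have s1 : ∑ i : Fin N, (X i : MvP N) = sig N 1 := by simp [sig]
    have s1' : ∑ i : Fin N, (X (i + 1) : MvP N) = sig N 1 := by
      rw [← s1]; exact Equiv.sum_comp (Equiv.addRight (1 : Fin N)) (fun i => (X i : MvP N))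
    have s2 : ∑ i : Fin N, (X i * X i : MvP N) = sig N 2 := by simp [sig, sq]
    have hdd : ∀ i, pderiv i (pderiv i f) =
        fA N (Polynomial.derivative p) (Polynomial.derivative q)
          + 4 * X i * Polynomial.aeval (sig N 1) (Polynomial.derivative q) + 2 * B := by
      intro i
      have e2 : pderiv i (2 : MvP N) = 0 := by
        have := pderiv_C (R := ℂ) (i := i) (a := 2)
        rwa [map_ofNat] at this
      rw [hd, map_add, pderiv_mul, pderiv_mul, e2, pderiv_X_self, hB, pderiv_S1]
      rw [fA, pderiv_shape]
      ring
    have t1 : ∑ i : Fin N, X i * pderiv i (pderiv i f) =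
        sig N 1 * fA N (Polynomial.derivative p) (Polynomial.derivative q)
        + 4 * sig N 2 * Polynomial.aeval (sig N 1) (Polynomial.derivative q)
        + 2 * sig N 1 * B := by
      rw [← s1, ← s2]
      simp only [Finset.sum_mul, Finset.mul_sum, ← Finset.sum_add_distrib]
      refine Finset.sum_congr rfl fun i _ => ?_
      rw [hdd]
      simp only [s1]
      ring
    have t2 : ∑ i : Fin N, (fA N p q + 2 * (X i + X (i + 1)) * B) =
        C (N : ℂ) * fA N p q + 4 * sig N 1 * B := by
      have : ∀ i : Fin N, fA N p q + 2 * (X i + X (i + 1)) * B =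
          fA N p q + 2 * B * X i + 2 * B * X (i + 1) := fun i => by ring
      simp only [this, Finset.sum_add_distrib, ← Finset.mul_sum, s1, s1']
      simp
      ring
    have t3 : ∑ i : Fin N, pderiv i f = C (N : ℂ) * fA N p q + 2 * sig N 1 * B := by
      have : ∀ i : Fin N, pderiv i f = fA N p q + 2 * B * X i := fun i => by rw [hd]; ring
      simp only [this, Finset.sum_add_distrib, ← Finset.mul_sum, s1]
      simp
      ring
    have t4 : ∑ i : Fin N, X i * pderiv i f = sig N 1 * fA N p q + 2 * sig N 2 * B := by
      have : ∀ i : Fin N, X i * pderiv i f = fA N p q * X i + 2 * B * (X i * X i) :=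
        fun i => by rw [hd]; ring
      simp only [this, Finset.sum_add_distrib, ← Finset.mul_sum, s1, s2]
      ring
    rw [t1, t2, t3, t4]
    generalize ((4 : ℝ) : ℂ) = c1
    generalize ((2 * a : ℝ) : ℂ) = c2
    generalize ((2 * (2 * b + 1) : ℝ) : ℂ) = c3
    generalize ((4 * ω : ℝ) : ℂ) = c4
    generalize ((N * ω * (4 * a + 2 * b + 1) : ℝ) : ℂ) = c5
    let D : Polynomial ℂ → Polynomial ℂ := fun r => Polynomial.derivative r
    let c : ℂ → Polynomial ℂ := fun x => Polynomial.C x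
    let x : Polynomial ℂ := Polynomial.X
    refine ⟨-(c c1 * (x * D (D p) + 2 * x * q + c c2 * (c N * D p + 4 * x * q)))
        - c c3 * (c N * D p + 2 * x * q) + c c4 * (x * D p) + c c5 * p,
      -(c c1 * (x * D (D q) + 4 * D q + c c2 * (c N * D q)))
        - c c3 * (c N * D q) + c c4 * (x * D q + 2 * q) + c c5 * q, ?_⟩
    simp only [D, c, x, map_add, map_mul, map_sub, map_neg, Polynomial.aeval_X, Polynomial.aeval_C,
      MvPolynomial.algebraMap_eq, map_ofNat, fA, hfdef, hB]
    ring
  · rw [← mem_restrictTotalDegree] at hn ⊢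
    have hC : ∀ (c : ℂ) (g : MvP N), g ∈ restrictTotalDegree (Fin N) ℂ n →
        C c * g ∈ restrictTotalDegree (Fin N) ℂ n := by
      intro c g hg; rw [C_mul']; exact Submodule.smul_mem _ _ hg
    have hX : ∀ (i j : Fin N) (g : MvP N), g ∈ restrictTotalDegree (Fin N) ℂ n →
        X i * pderiv j g ∈ restrictTotalDegree (Fin N) ℂ n := by
      intro i j g hg
      rw [mem_restrictTotalDegree] at hg ⊢
      exact mulX_pderiv_mem i j hg
    have hP : ∀ (j : Fin N) (g : MvP N), g ∈ restrictTotalDegree (Fin N) ℂ n →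
        pderiv j g ∈ restrictTotalDegree (Fin N) ℂ n := by
      intro j g hg
      rw [mem_restrictTotalDegree] at hg ⊢
      exact pderiv_mem j hg
    refine add_mem (add_mem (sub_mem (neg_mem (hC _ _ (add_mem ?_ (hC _ _ ?_)))) (hC _ _ ?_))
      (hC _ _ ?_)) (hC _ _ hn)
    · exact sum_mem fun i _ => hX _ _ _ (hP _ _ hn)
    · refine sum_mem fun i _ => ?_
      have h := sub_mem (hX i i f hn) (hX (i + 1) (i + 1) f hn)
      rw [hQ, mem_restrictTotalDegree] at h
      rw [mem_restrictTotalDegree]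
      exact deg_of_mul (X_sub_ne (succ_ne hN i)) h
    · exact sum_mem fun i _ => hP _ _ hn
    · exact sum_mem fun i _ => hX _ _ _ hn
  · unfold Hbar1op T1op
    have e2 : ∀ i : Fin N, (phi N (X i - X (i + 1)))⁻¹ *
        phi N (X i * pderiv i f - X (i + 1) * pderiv (i + 1) f) =
        phi N (fA N p q + 2 * (X i + X (i + 1)) * B) := fun i =>
      phi_inv_mul (X_sub_ne (succ_ne hN i)) (hQ i)
    simp only [e2, hsym, map_zero, mul_zero, Finset.sum_const_zero, sub_zero]
    rw [map_add, map_add, map_sub, map_neg]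
    simp only [map_mul, map_add (phi N) (Finset.sum _ _), map_sum]

/-- The rational-function identity behind `T₁ (z_i g(σ₁))`. -/
theorem pair_identity {N : ℕ} [NeZero N] (hN : 3 ≤ N) (g g' : MvP N) (A : FractionRing (MvP N))
    (hd : ∀ j, pderiv j g = g') (hs : ∀ e : Equiv.Perm (Fin N), rename e g = g) (i : Fin N) :
    2 * A * (∑ j : Fin N, (phi N (X j - X (j + 1)))⁻¹ *
        phi N (X j * pderiv j (X i * g) - X (j + 1) * pderiv (j + 1) (X i * g)))
    - A * ∑ j : Fin N, phi N (X j + X (j + 1)) * ((phi N (X j - X (j + 1)))⁻¹) ^ 2 *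
        phi N (X i * g - rename (Equiv.swap j (j + 1)) (X i * g))
    = 2 * A * phi N (C (N : ℂ) * (X i * g')) + 2 * A * phi N g := by
  classical
  have hterm : ∀ j : Fin N, 2 * A * ((phi N (X j - X (j + 1)))⁻¹ *
        phi N (X j * pderiv j (X i * g) - X (j + 1) * pderiv (j + 1) (X i * g)))
      - A * (phi N (X j + X (j + 1)) * ((phi N (X j - X (j + 1)))⁻¹) ^ 2 *
        phi N (X i * g - rename (Equiv.swap j (j + 1)) (X i * g))) =
      2 * A * phi N (X i * g') + (if j = i then A * phi N g else 0)
        + (if j + 1 = i then A * phi N g else 0) := by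
    intro j
    have hne := succ_ne hN j
    have h0 := phi_ne (X_sub_ne hne)
    rw [map_mul (rename _), hs, rename_X, pderiv_mul, pderiv_mul, hd, hd, pderiv_X, pderiv_X]
    by_cases h1 : j = i
    · subst h1
      rw [if_pos rfl, if_neg (Ne.symm hne), Equiv.swap_apply_left]
      simp only [Pi.single_eq_same, Pi.single_eq_of_ne hne, map_sub, map_mul, map_add, map_one,
        map_zero] at h0 ⊢
      field_simp
      simp
      ring
    · by_cases h2 : j + 1 = i
      · subst h2
        rw [if_pos rfl, if_neg hne, Equiv.swap_apply_right]
        simp only [Pi.single_eq_same, Pi.single_eq_of_ne (Ne.symm hne), map_sub, map_mul, map_add,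
          map_one, map_zero] at h0 ⊢
        field_simp
        simp
        ring
      · rw [if_neg h1, if_neg h2, Equiv.swap_apply_of_ne_of_ne (Ne.symm h1) (Ne.symm h2)]
        simp only [Pi.single_eq_of_ne (Ne.symm h1), Pi.single_eq_of_ne (Ne.symm h2), map_sub,
          map_mul, map_add, map_one, map_zero] at h0 ⊢
        field_simp
        simp
        ring
  rw [Finset.mul_sum, Finset.mul_sum, ← Finset.sum_sub_distrib, Finset.sum_congr rfl
    fun j _ => hterm j, Finset.sum_add_distrib, Finset.sum_add_distrib]
  have e1 : (∑ j : Fin N, if j + 1 = i then A * phi N g else 0) = A * phi N g := by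
    refine (Equiv.sum_comp (Equiv.addRight (1 : Fin N))
      (fun j => if j = i then A * phi N g else 0)).trans ?_
    simp
  rw [e1]
  simp
  ring

theorem G_case {N : ℕ} [NeZero N] (hN : 3 ≤ N) (a b ω : ℝ) (m : ℕ) (G : Polynomial ℂ)
    (hm : (Polynomial.aeval (sig N 1) G : MvP N).totalDegree ≤ m) :
    ∃ (G' : Polynomial ℂ) (κ : ℂ), (Polynomial.aeval (sig N 1) G' : MvP N).totalDegree ≤ m ∧
      ∀ i : Fin N, Hbar1op N a b ω (X i * Polynomial.aeval (sig N 1) G) =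
        phi N (X i * Polynomial.aeval (sig N 1) G' + C κ * Polynomial.aeval (sig N 1) G) := by
  classical
  let D : Polynomial ℂ → Polynomial ℂ := fun r => Polynomial.derivative r
  let c : ℂ → Polynomial ℂ := fun x => Polynomial.C x
  let x : Polynomial ℂ := Polynomial.X
  set g : MvP N := Polynomial.aeval (sig N 1) G with hg
  set g1 : MvP N := Polynomial.aeval (sig N 1) (D G) with hg1
  set g2 : MvP N := Polynomial.aeval (sig N 1) (D (D G)) with hg2
  have d0 : ∀ j, pderiv j g = g1 := fun j => pderiv_S1 j G
  have d1 : ∀ j, pderiv j g1 = g2 := fun j => pderiv_S1 j (D G)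
  have hs : ∀ e : Equiv.Perm (Fin N), rename e g = g := fun e => rename_S1 e G
  have s1 : ∑ i : Fin N, (X i : MvP N) = sig N 1 := by simp [sig]
  let α : ℂ := ((a : ℝ) : ℂ)
  let k1 : ℂ := ((2 * (2 * b + 1) : ℝ) : ℂ)
  let k2 : ℂ := ((4 * ω : ℝ) : ℂ)
  let k3 : ℂ := ((N * ω * (4 * a + 2 * b + 1) : ℝ) : ℂ)
  let G' : Polynomial ℂ := -(c 4 * (x * D (D G) + c 2 * D G + c (2 * α * N) * D G))
    - c (k1 * N) * D G + c k2 * (x * D G + G) + c k3 * G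
  have hG' : (Polynomial.aeval (sig N 1) G' : MvP N) =
      -(C 4 * (sig N 1 * g2 + C 2 * g1 + C (2 * α * N) * g1))
      - C (k1 * N) * g1 + C k2 * (sig N 1 * g1 + g) + C k3 * g := by
    simp only [G', c, x, map_add, map_mul, map_sub, map_neg, Polynomial.aeval_X,
      Polynomial.aeval_C, MvPolynomial.algebraMap_eq, hg, hg1, hg2, D]
  refine ⟨G', -(8 * α) - k1, ?_, ?_⟩
  · rw [hG']
    rw [← mem_restrictTotalDegree] at hm ⊢
    have hC : ∀ (c : ℂ) (g : MvP N), g ∈ restrictTotalDegree (Fin N) ℂ m →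
        C c * g ∈ restrictTotalDegree (Fin N) ℂ m := by
      intro c g hg; rw [C_mul']; exact Submodule.smul_mem _ _ hg
    have hX : ∀ (j : Fin N) (g : MvP N), g ∈ restrictTotalDegree (Fin N) ℂ m →
        sig N 1 * pderiv j g ∈ restrictTotalDegree (Fin N) ℂ m := by
      intro j g hg
      rw [← s1, Finset.sum_mul]
      refine sum_mem fun i _ => ?_
      rw [mem_restrictTotalDegree] at hg ⊢
      exact mulX_pderiv_mem i j hg
    have hP : ∀ (j : Fin N) (g : MvP N), g ∈ restrictTotalDegree (Fin N) ℂ m →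
        pderiv j g ∈ restrictTotalDegree (Fin N) ℂ m := by
      intro j g hg
      rw [mem_restrictTotalDegree] at hg ⊢
      exact pderiv_mem j hg
    have m1 : g1 ∈ restrictTotalDegree (Fin N) ℂ m := d0 0 ▸ hP 0 g hm
    have m2 : sig N 1 * g1 ∈ restrictTotalDegree (Fin N) ℂ m := d0 0 ▸ hX 0 g hm
    have m3 : sig N 1 * g2 ∈ restrictTotalDegree (Fin N) ℂ m := d1 0 ▸ hX 0 g1 m1
    exact add_mem (add_mem (sub_mem (neg_mem (hC _ _ (add_mem (add_mem m3 (hC _ _ m1))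
      (hC _ _ m1)))) (hC _ _ m1)) (hC _ _ (add_mem m2 hm))) (hC _ _ hm)
  · intro i
    have hd : ∀ j, pderiv j (X i * g) = X i * g1 + (if j = i then g else 0) := by
      intro j
      rw [pderiv_mul, d0, pderiv_X, Pi.single_apply]
      simp only [@eq_comm _ i j]
      split_ifs <;> ring
    have hdd : ∀ j, pderiv j (pderiv j (X i * g)) = X i * g2 + (if j = i then 2 * g1 else 0) := by
      intro j
      rw [hd, map_add, pderiv_mul, d1, pderiv_X, Pi.single_apply]
      simp only [@eq_comm _ i j]
      split_ifs
      · rw [d0]; ring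
      · simp
    have t1 : ∑ j : Fin N, X j * pderiv j (pderiv j (X i * g)) =
        X i * (sig N 1 * g2 + 2 * g1) := by
      simp only [hdd, mul_add, Finset.sum_add_distrib, ← Finset.sum_mul, s1]
      simp
      ring
    have t3 : ∑ j : Fin N, pderiv j (X i * g) = C (N : ℂ) * (X i * g1) + g := by
      simp only [hd, Finset.sum_add_distrib]
      simp
    have t4 : ∑ j : Fin N, X j * pderiv j (X i * g) = X i * (sig N 1 * g1 + g) := by
      simp only [hd, mul_add, Finset.sum_add_distrib, ← Finset.sum_mul, s1]
      simp
      ring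
    have key := pair_identity hN g g1 (phi N (C ((a : ℝ) : ℂ))) d0 hs i
    unfold Hbar1op T1op
    have c2 : phi N (C ((2 * a : ℝ) : ℂ)) = 2 * phi N (C ((a : ℝ) : ℂ)) := by
      push_cast; simp only [map_mul, map_ofNat]
    rw [c2, add_sub_assoc, key, ← map_sum, ← map_sum, ← map_sum, t1, t3, t4, hG']
    simp only [map_add, map_sub, map_mul, map_neg, map_ofNat, Complex.ofReal_ofNat]
    simp only [α, k1, k2, k3]
    ring

theorem stmt_8 (N d : ℕ) [NeZero N] (hN : 3 ≤ N) (hd : 1 ≤ d) (a b ω : ℝ) (n : ℕ)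
    (Φ : SpinPoly N d) (hΦ : Φ ∈ H1space N d n) :
    ∃ Φ' ∈ H1space N d n, ∀ c : Fin N → Fin d, phi N (Φ' c) = Hbar1op N a b ω (Φ c) := by
  unfold H1space at hΦ
  induction hΦ using Submodule.span_induction with
  | mem Φ h =>
    rcases h with ⟨s, F, h1, h2, rfl⟩ | ⟨s, G, h1, rfl⟩
    · obtain ⟨f', hf', hn', he⟩ := F_case hN a b ω n (shape_of F h1) h2
      refine ⟨_, mem_F s hf' hn', fun c => ?_⟩
      rw [H_C_mul, ← he, map_mul]
    · obtain ⟨G', κ, hG', he⟩ := G_case hN a b ω (n - 1) G (by omega)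
      refine ⟨_, add_mem (mem_G s G' (by omega)) (Submodule.smul_mem _ κ
        (mem_F s (f := Polynomial.aeval (sig N 1) G) ⟨G, 0, by simp⟩
          (by omega))), fun c => ?_⟩
      rw [H_sum]
      simp only [H_C_mul, he, Pi.add_apply, Pi.smul_apply, ← map_mul, ← map_sum]
      congr 1
      simp only [mul_add, Finset.sum_add_distrib, Lam, Finset.sum_apply, map_sum, Finset.sum_mul,
        Finset.smul_sum, smul_eq_C_mul]
      congr 1
      refine Finset.sum_congr rfl fun i _ => ?_
      ring
  | zero =>
    refine ⟨0, zero_mem _, fun c => ?_⟩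
    have := H_C_mul (N := N) a b ω 0 0
    simp only [map_zero, zero_mul] at this
    simp [this]
  | add x y _ _ hx hy =>
    obtain ⟨x', hx', ex⟩ := hx
    obtain ⟨y', hy', ey⟩ := hy
    exact ⟨x' + y', add_mem hx' hy', fun c => by
      rw [Pi.add_apply, Pi.add_apply, H_add, map_add, ex, ey]⟩
  | smul r x _ hx =>
    obtain ⟨x', hx', ex⟩ := hx
    exact ⟨r • x', Submodule.smul_mem _ r hx', fun c => by
      rw [Pi.smul_apply, Pi.smul_apply, smul_eq_C_mul, smul_eq_C_mul, H_C_mul, map_mul, ex]⟩
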